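/- Let 1 ≤ k ≤ n. Then ‖P'‖_{[-1,1]} ≥ max{1/2, (1/808)·((n-k)/k)^{1/2}}·‖P‖_{[-1,1]} for every P ∈ 𝓕_{n,k}^c having at least one zero in [-1,1]. -/

import Mathlib

open Polynomial Set
open scoped Classical

/-!
Write a point `z ∉ [-1, 1]` as `z = (w + w⁻¹) / 2` with `0 < ‖w‖ < 1`. By Cauchy's formula, the
average over the unit circle of `(1 - s²) (s / 2 + i) / (z - Re s)` is `w² + 2 i w`. The real part
of this number is never below `-3`, and it is at least `‖w‖²` when `Im z ≥ 0`. Summing over the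
roots of a polynomial `Q` without zeros on `[-1, 1]`, a small logarithmic derivative `Q' / Q` on
`[-1, 1]` therefore forces the roots in the upper half plane to be few compared with the others.

If `‖P'‖ ≤ M` on `[-1, 1]` and `‖P‖` attains its maximum `S` at `b`, then `‖P‖ ≥ S / 2` at distance
at most `S / (2 M)` from `b`. Applying the above to `P` on an interval of length `S / (2 M)` near
`b` bounds the number of roots of `P` in the upper half disc by `(M / S)²` times the number of its
other roots plus one, up to a constant.
-/

open Complex Metric Real

/-! ### Circle averages -/

section CircleAverage

variable {E : Type*} [NormedAddCommGroup E] [NormedSpace ℝ E] {c : ℂ} {R : ℝ}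

theorem norm_circleAverage_le_of_norm_le {f : ℂ → E} {B : ℝ}
    (hf : ∀ z ∈ sphere c |R|, ‖f z‖ ≤ B) : ‖circleAverage f c R‖ ≤ B := by
  have h := intervalIntegral.norm_integral_le_of_norm_le_const (a := 0) (b := 2 * π)
    fun θ _ ↦ hf _ (circleMap_mem_sphere' c R θ)
  rw [sub_zero, abs_of_pos two_pi_pos] at h
  rwa [circleAverage_def, norm_smul, norm_inv, Real.norm_of_nonneg two_pi_pos.le,
    inv_mul_le_iff₀ two_pi_pos, mul_comm (2 * π)]

theorem circleAverage_multiset_sum {ι : Type*} {s : Multiset ι} {f : ι → ℂ → E}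
    (hf : ∀ i ∈ s, CircleIntegrable (f i) c R) :
    circleAverage (fun z ↦ (s.map fun i ↦ f i z).sum) c R =
      (s.map fun i ↦ circleAverage (f i) c R).sum := by
  simp_rw [Finset.sum_multiset_map_count, ← Nat.cast_smul_eq_nsmul ℝ]
  rw [circleAverage_fun_sum (f := fun i z ↦ (s.count i : ℝ) • f i z)
    fun i hi ↦ (hf i (Multiset.mem_toFinset.mp hi)).fun_continuousOn_smul continuousOn_const]
  simp_rw [circleAverage_fun_smul]

end CircleAverage

/-! ### The Joukowski map -/

/-- The Joukowski map `w ↦ (w + w⁻¹) / 2`, which sends the punctured open unit disc onto the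
complement of `[-1, 1]` and the unit circle onto `[-1, 1]`. -/
noncomputable def joukowski (w : ℂ) : ℂ := (w + w⁻¹) / 2

theorem joukowski_inv (w : ℂ) : joukowski w⁻¹ = joukowski w := by
  rw [joukowski, joukowski, inv_inv, add_comm]

theorem joukowski_of_norm_eq_one {s : ℂ} (hs : ‖s‖ = 1) : joukowski s = s.re := by
  rw [joukowski, Complex.inv_eq_conj hs, Complex.re_eq_add_conj]

theorem exists_ne_zero_joukowski_eq (z : ℂ) : ∃ w ≠ 0, joukowski w = z := by
  obtain ⟨d, hd⟩ := IsAlgClosed.exists_pow_nat_eq (z ^ 2 - 1) (n := 2) two_pos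
  have hmul : (z - d) * (z + d) = 1 := by linear_combination -hd
  refine ⟨z - d, left_ne_zero_of_mul_eq_one hmul, ?_⟩
  rw [joukowski, inv_eq_of_mul_eq_one_right hmul]
  ring

theorem re_mem_Icc_of_norm_eq_one {s : ℂ} (hs : ‖s‖ = 1) : s.re ∈ Icc (-1 : ℝ) 1 :=
  abs_le.mp (hs ▸ abs_re_le_norm s)

theorem exists_joukowski_eq_of_notMem {z : ℂ} (hz : z ∉ ofReal '' Icc (-1 : ℝ) 1) :
    ∃ w ≠ 0, ‖w‖ < 1 ∧ joukowski w = z := by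
  obtain ⟨w, hw0, rfl⟩ := exists_ne_zero_joukowski_eq z
  rcases lt_trichotomy ‖w‖ 1 with hlt | heq | hgt
  · exact ⟨w, hw0, hlt, rfl⟩
  · exact absurd ⟨w.re, re_mem_Icc_of_norm_eq_one heq, (joukowski_of_norm_eq_one heq).symm⟩ hz
  · exact ⟨w⁻¹, inv_ne_zero hw0, norm_inv w ▸ inv_lt_one_of_one_lt₀ hgt, joukowski_inv w⟩

theorem joukowski_sub_joukowski {w s : ℂ} (hw : w ≠ 0) (hs : s ≠ 0) :
    joukowski w - joukowski s = (s - w) * (1 - w * s) / (2 * w * s) := by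
  simp only [joukowski]
  field_simp
  ring

theorem one_le_norm_mul_of_joukowski {w : ℂ} (hw0 : w ≠ 0) (hw : ‖w‖ ≤ 1) :
    1 ≤ ‖w‖ * (2 * ‖joukowski w‖ + 1) := by
  have hinv : w⁻¹ = 2 * joukowski w - w := by rw [joukowski]; ring
  have hle : ‖w‖⁻¹ ≤ 2 * ‖joukowski w‖ + 1 :=
    calc ‖w‖⁻¹ = ‖2 * joukowski w - w‖ := by rw [← hinv, norm_inv]
      _ ≤ ‖2 * joukowski w‖ + ‖w‖ := norm_sub_le _ _
      _ ≤ 2 * ‖joukowski w‖ + 1 := by rw [norm_mul, Complex.norm_ofNat]; gcongr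
  exact (inv_le_iff_one_le_mul₀' (norm_pos_iff.mpr hw0)).mp hle

theorem joukowski_im (w : ℂ) : (joukowski w).im = w.im * (1 - (‖w‖ ^ 2)⁻¹) / 2 := by
  rw [joukowski, Complex.div_ofNat_im, add_im, inv_im, normSq_eq_norm_sq]
  ring

theorem im_nonpos_of_joukowski_im_nonneg {w : ℂ} (hw0 : w ≠ 0) (hw : ‖w‖ < 1)
    (him : 0 ≤ (joukowski w).im) : w.im ≤ 0 := by
  have hinv : 1 < (‖w‖ ^ 2)⁻¹ :=
    (one_lt_inv₀ (by positivity)).mpr (pow_lt_one₀ (norm_nonneg w) hw two_ne_zero)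
  rw [joukowski_im] at him
  nlinarith

/-- Without the factor `1 - s ^ 2` the right-hand side would be divided by `1 - w ^ 2`. -/
theorem circleAverage_div_joukowski_sub {g : ℂ → ℂ} (hg : DiffContOnCl ℂ g (ball 0 1)) {w : ℂ}
    (hw0 : w ≠ 0) (hw : ‖w‖ < 1) :
    circleAverage (fun s ↦ (1 - s ^ 2) * g s / (joukowski w - s.re)) 0 1 = 2 * w * g w := by
  have hden : ∀ s : ℂ, ‖s‖ ≤ 1 → 1 - w * s ≠ 0 := fun s hs h ↦ by
    have hlt : ‖w * s‖ < 1 := by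
      rw [norm_mul]
      exact mul_lt_one_of_nonneg_of_lt_one_left (norm_nonneg w) hw hs
    rw [← sub_eq_zero.mp h, norm_one] at hlt
    exact hlt.false
  set f : ℂ → ℂ := fun s ↦ ((1 - s ^ 2) * (2 * w) / (1 - w * s)) * g s with hf
  have hfdiff : DiffContOnCl ℂ f (ball 0 |1|) := by
    have hfactor : DifferentiableOn ℂ (fun s ↦ (1 - s ^ 2) * (2 * w) / (1 - w * s))
        (closure (ball 0 1)) := fun s hs ↦ by
      have := hden s (by simpa [closure_ball] using hs)
      exact DifferentiableAt.differentiableWithinAt (by fun_prop (disch := assumption))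
    rw [abs_one]
    exact hfactor.diffContOnCl.smul hg
  have hcauchy := hfdiff.circleAverage_smul_div (w := w) (by simpa using hw)
  have hfw : f w = 2 * w * g w := by
    have := sq w ▸ hden w hw.le
    rw [hf]
    field_simp
  rw [← hfw, ← hcauchy]
  refine circleAverage_congr_sphere fun s hs ↦ ?_
  have hs1 : ‖s‖ = 1 := by simpa using hs
  have hs0 : s ≠ 0 := norm_ne_zero_iff.mp (hs1 ▸ one_ne_zero)
  have hsw : s - w ≠ 0 := sub_ne_zero.mpr fun h ↦ hw.ne (h ▸ hs1)
  have := hden s hs1.le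
  simp only [hf, smul_eq_mul, sub_zero]
  rw [← joukowski_of_norm_eq_one hs1, joukowski_sub_joukowski hw0 hs0]
  field_simp

/-! ### Averages attached to roots -/

/-- The weight `(1 - s ^ 2) * (s / 2 + I)` on the unit circle, chosen so that its average against
the Cauchy kernel of `[-1, 1]` has positive real part at every pole in the closed upper half
plane. -/
noncomputable def upperWeight (s : ℂ) : ℂ := (1 - s ^ 2) * (s / 2 + I)

/-- The average of `upperWeight` against the Cauchy kernel with pole `z`, where the unit circle is
projected onto `[-1, 1]` by `s ↦ s.re`. -/
noncomputable def upperAverage (z : ℂ) : ℂ :=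
  circleAverage (fun s ↦ upperWeight s / (z - s.re)) 0 1

theorem norm_upperWeight_le {s : ℂ} (hs : ‖s‖ = 1) : ‖upperWeight s‖ ≤ 3 := by
  have hleft : ‖1 - s ^ 2‖ ≤ 2 := by
    refine (norm_sub_le _ _).trans ?_
    rw [norm_one, norm_pow, hs]
    norm_num
  have hright : ‖s / 2 + I‖ ≤ 3 / 2 := by
    refine (norm_add_le _ _).trans ?_
    rw [norm_div, hs, norm_I, Complex.norm_ofNat]
    norm_num
  calc ‖upperWeight s‖ = ‖1 - s ^ 2‖ * ‖s / 2 + I‖ := norm_mul _ _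
    _ ≤ 2 * (3 / 2) := by gcongr
    _ = 3 := by norm_num

theorem circleIntegrable_upperWeight_div {z : ℂ} (hz : z ∉ ofReal '' Icc (-1 : ℝ) 1) :
    CircleIntegrable (fun s ↦ upperWeight s / (z - s.re)) 0 1 := by
  refine ContinuousOn.circleIntegrable zero_le_one
    (ContinuousOn.div₀ (by unfold upperWeight; fun_prop) (by fun_prop) fun s hs ↦ ?_)
  exact sub_ne_zero.mpr fun h ↦
    hz ⟨s.re, re_mem_Icc_of_norm_eq_one (mem_sphere_zero_iff_norm.mp hs), h.symm⟩

theorem upperAverage_joukowski {w : ℂ} (hw0 : w ≠ 0) (hw : ‖w‖ < 1) :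
    upperAverage (joukowski w) = w ^ 2 + 2 * I * w := by
  have hg : DiffContOnCl ℂ (fun s : ℂ ↦ s / 2 + I) (ball 0 1) :=
    Differentiable.diffContOnCl (by fun_prop)
  refine (circleAverage_div_joukowski_sub hg hw0 hw).trans ?_
  ring

theorem neg_three_le_re_upperAverage {z : ℂ} (hz : z ∉ ofReal '' Icc (-1 : ℝ) 1) :
    -3 ≤ (upperAverage z).re := by
  obtain ⟨w, hw0, hw, rfl⟩ := exists_joukowski_eq_of_notMem hz
  have hnorm : ‖w ^ 2 + 2 * I * w‖ ≤ 3 :=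
    calc ‖w ^ 2 + 2 * I * w‖ ≤ ‖w ^ 2‖ + ‖2 * I * w‖ := norm_add_le _ _
      _ = ‖w‖ ^ 2 + 2 * ‖w‖ := by simp
      _ ≤ 1 ^ 2 + 2 * 1 := by gcongr
      _ = 3 := by norm_num
  rw [upperAverage_joukowski hw0 hw]
  exact (abs_le.mp ((abs_re_le_norm _).trans hnorm)).1

theorem sq_norm_le_re_sq_add {w : ℂ} (hw : ‖w‖ ≤ 1) (him : w.im ≤ 0) :
    ‖w‖ ^ 2 ≤ (w ^ 2 + 2 * I * w).re := by
  have hre : (w ^ 2 + 2 * I * w).re = w.re ^ 2 - w.im ^ 2 - 2 * w.im := by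
    simp only [pow_two, add_re, mul_re, re_ofNat, I_re, mul_zero, im_ofNat, I_im, mul_one,
      sub_self, zero_mul, mul_im, add_zero, zero_sub]
    ring
  have hle : -1 ≤ w.im := (abs_le.mp ((abs_im_le_norm w).trans hw)).1
  rw [hre, Complex.sq_norm, Complex.normSq_apply]
  nlinarith

theorem inv_sq_le_re_upperAverage {z : ℂ} {R : ℝ} (hz : z ∉ ofReal '' Icc (-1 : ℝ) 1)
    (him : 0 ≤ z.im) (hR : ‖z‖ ≤ R) : ((2 * R + 1) ^ 2)⁻¹ ≤ (upperAverage z).re := by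
  obtain ⟨w, hw0, hw, rfl⟩ := exists_joukowski_eq_of_notMem hz
  have hR0 : 0 ≤ R := (norm_nonneg _).trans hR
  have hw_ge : (2 * R + 1)⁻¹ ≤ ‖w‖ := by
    rw [inv_le_iff_one_le_mul₀ (by positivity)]
    exact (one_le_norm_mul_of_joukowski hw0 hw.le).trans (by gcongr)
  calc ((2 * R + 1) ^ 2)⁻¹ = (2 * R + 1)⁻¹ ^ 2 := (inv_pow _ _).symm
    _ ≤ ‖w‖ ^ 2 := by gcongr
    _ ≤ (w ^ 2 + 2 * I * w).re :=
      sq_norm_le_re_sq_add hw.le (im_nonpos_of_joukowski_im_nonneg hw0 hw him)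
    _ = (upperAverage (joukowski w)).re := by rw [upperAverage_joukowski hw0 hw]

/-! ### Counting roots by the logarithmic derivative -/

theorem mul_countP_sub_mul_countP_not_le_sum {ι : Type*} {s : Multiset ι} {p : ι → Prop}
    [DecidablePred p] {f : ι → ℝ} {α β : ℝ} (hα : ∀ i ∈ s, p i → α ≤ f i)
    (hβ : ∀ i ∈ s, ¬ p i → -β ≤ f i) :
    α * s.countP p - β * s.countP (fun i ↦ ¬ p i) ≤ (s.map f).sum := by
  induction s using Multiset.induction_on with
  | empty => simp
  | cons i s ih =>
    have hs := ih (fun j hj ↦ hα j (Multiset.mem_cons_of_mem hj))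
      (fun j hj ↦ hβ j (Multiset.mem_cons_of_mem hj))
    rw [Multiset.map_cons, Multiset.sum_cons]
    by_cases hi : p i
    · simp only [Multiset.countP_cons, hi, not_true_eq_false, if_true, if_false]
      push_cast
      linarith [hα i (Multiset.mem_cons_self i s) hi]
    · simp only [Multiset.countP_cons, hi, not_false_eq_true, if_true, if_false]
      push_cast
      linarith [hβ i (Multiset.mem_cons_self i s) hi]

theorem notMem_image_ofReal_of_mem_roots {Q : ℂ[X]} {A : Set ℝ}
    (hQ : ∀ x ∈ A, Q.eval (x : ℂ) ≠ 0) {z : ℂ} (hz : z ∈ Q.roots) : z ∉ ofReal '' A := by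
  rintro ⟨x, hx, rfl⟩
  exact hQ x hx (mem_roots'.mp hz).2

theorem sum_upperAverage_roots {Q : ℂ[X]} (hQ : ∀ x ∈ Icc (-1 : ℝ) 1, Q.eval (x : ℂ) ≠ 0) :
    (Q.roots.map upperAverage).sum =
      circleAverage (fun s ↦ -(upperWeight s * ((derivative Q).eval (s.re : ℂ) /
        Q.eval (s.re : ℂ)))) 0 1 := by
  refine (circleAverage_multiset_sum fun z hz ↦
    circleIntegrable_upperWeight_div (notMem_image_ofReal_of_mem_roots hQ hz)).symm.trans ?_
  refine circleAverage_congr_sphere fun s hs ↦ ?_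
  have hs1 : ‖s‖ = 1 := by simpa using hs
  rw [(IsAlgClosed.splits Q).eval_derivative_div_eval_of_ne_zero
    (hQ _ (re_mem_Icc_of_norm_eq_one hs1)), ← neg_mul, ← Multiset.sum_map_mul_left]
  refine congrArg Multiset.sum (Multiset.map_congr rfl fun z _ ↦ ?_)
  rw [← neg_sub z, one_div, inv_neg, neg_mul_neg, div_eq_mul_inv]

theorem inv_sq_mul_countP_roots_le {Q : ℂ[X]} {L R : ℝ} {p : ℂ → Prop} [DecidablePred p]
    (hp : ∀ z, p z → 0 ≤ z.im ∧ ‖z‖ ≤ R) (hQ : ∀ x ∈ Icc (-1 : ℝ) 1, Q.eval (x : ℂ) ≠ 0)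
    (hL : ∀ x ∈ Icc (-1 : ℝ) 1, ‖(derivative Q).eval (x : ℂ)‖ ≤ L * ‖Q.eval (x : ℂ)‖) :
    ((2 * R + 1) ^ 2)⁻¹ * Q.roots.countP p ≤ 3 * Q.roots.countP (fun z ↦ ¬ p z) + 3 * L := by
  have hoff : ∀ z ∈ Q.roots, z ∉ ofReal '' Icc (-1 : ℝ) 1 :=
    fun z hz ↦ notMem_image_ofReal_of_mem_roots hQ hz
  have hlower := mul_countP_sub_mul_countP_not_le_sum (f := fun z ↦ (upperAverage z).re)
    (fun z hz hpz ↦ inv_sq_le_re_upperAverage (hoff z hz) (hp z hpz).1 (hp z hpz).2)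
    (fun z hz _ ↦ neg_three_le_re_upperAverage (hoff z hz))
  have hre : (Q.roots.map fun z ↦ (upperAverage z).re).sum =
      (Q.roots.map upperAverage).sum.re := by
    rw [← reLm_coe, map_multiset_sum, Multiset.map_map]
    rfl
  have hupper : ‖(Q.roots.map upperAverage).sum‖ ≤ 3 * L := by
    rw [sum_upperAverage_roots hQ]
    refine norm_circleAverage_le_of_norm_le fun s hs ↦ ?_
    have hs1 : ‖s‖ = 1 := by simpa using hs
    have hx := re_mem_Icc_of_norm_eq_one hs1
    rw [norm_neg, norm_mul, norm_div]
    have hlog := (div_le_iff₀ (norm_pos_iff.mpr (hQ _ hx))).mpr (hL _ hx)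
    gcongr
    exact norm_upperWeight_le hs1
  linarith [re_le_norm (Q.roots.map upperAverage).sum]

theorem sq_mul_countP_roots_le {P : ℂ[X]} {c r L R : ℝ} {p : ℂ → Prop} [DecidablePred p]
    (hr : 0 < r) (hp : ∀ z, p z → 0 ≤ z.im ∧ ‖z - c‖ ≤ R)
    (hP : ∀ x ∈ closedBall c r, P.eval (x : ℂ) ≠ 0)
    (hL : ∀ x ∈ closedBall c r, ‖(derivative P).eval (x : ℂ)‖ ≤ L * ‖P.eval (x : ℂ)‖) :
    (r / (2 * R + r)) ^ 2 * P.roots.countP p ≤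
      3 * P.roots.countP (fun z ↦ ¬ p z) + 3 * (r * L) := by
  have hrC : (r : ℂ) ≠ 0 := ofReal_ne_zero.mpr hr.ne'
  set Q : ℂ[X] := P.comp (C (r : ℂ) * X + C (c : ℂ)) with hQdef
  have hQ_eval (x : ℝ) : Q.eval (x : ℂ) = P.eval ((r * x + c : ℝ) : ℂ) := by
    simp [hQdef]
  have hQ'_eval (x : ℝ) :
      (derivative Q).eval (x : ℂ) = r * (derivative P).eval ((r * x + c : ℝ) : ℂ) := by
    simp [hQdef, derivative_comp]
  have hmem {x : ℝ} (hx : x ∈ Icc (-1 : ℝ) 1) : r * x + c ∈ closedBall c r := by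
    rw [mem_closedBall, Real.dist_eq, add_sub_cancel_right, abs_mul, abs_of_pos hr]
    exact mul_le_of_le_one_right hr.le (abs_le.mpr hx)
  have hcount (q : ℂ → Prop) [DecidablePred q] :
      P.roots.countP q = Q.roots.countP fun z ↦ q (r * z + c) := by
    rw [← map_roots_comp_C_mul_X_add_C P _ _ hrC.isUnit, Multiset.countP_map,
      Multiset.countP_eq_card_filter]
  have hpQ (z : ℂ) (hz : p (r * z + c)) : 0 ≤ z.im ∧ ‖z‖ ≤ R / r := by
    obtain ⟨him, hnorm⟩ := hp _ hz
    constructor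
    · simpa [hr] using him
    · rw [le_div_iff₀' hr]
      simpa [abs_of_pos hr] using hnorm
  have hscale : ((2 * (R / r) + 1) ^ 2)⁻¹ = (r / (2 * R + r)) ^ 2 := by
    rw [← inv_pow, ← inv_div (2 * R + r), add_div, div_self hr.ne', mul_div_assoc]
  rw [hcount, hcount, ← hscale]
  refine inv_sq_mul_countP_roots_le hpQ (fun x hx ↦ hQ_eval x ▸ hP _ (hmem hx)) fun x hx ↦ ?_
  rw [hQ_eval, hQ'_eval, norm_mul, Complex.norm_of_nonneg hr.le, mul_assoc]
  exact mul_le_mul_of_nonneg_left (hL _ (hmem hx)) hr.le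

/-! ### Polynomials on `[-1, 1]` -/

/-- The norm `‖P‖_{[-1,1]}`, the supremum of `‖P x‖` over real `x ∈ [-1, 1]`. -/
noncomputable def intervalNorm (P : ℂ[X]) : ℝ := ⨆ x : Icc (-1 : ℝ) 1, ‖P.eval ((x : ℝ) : ℂ)‖

theorem continuous_norm_eval_ofReal (P : ℂ[X]) : Continuous fun x : ℝ ↦ ‖P.eval (x : ℂ)‖ :=
  (P.continuous.comp continuous_ofReal).norm

theorem norm_eval_le_intervalNorm (P : ℂ[X]) {x : ℝ} (hx : x ∈ Icc (-1 : ℝ) 1) :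
    ‖P.eval (x : ℂ)‖ ≤ intervalNorm P :=
  le_ciSup (isCompact_range
    ((continuous_norm_eval_ofReal P).comp continuous_subtype_val)).bddAbove ⟨x, hx⟩

theorem intervalNorm_nonneg (P : ℂ[X]) : 0 ≤ intervalNorm P :=
  Real.iSup_nonneg fun _ ↦ norm_nonneg _

theorem exists_norm_eval_eq_intervalNorm (P : ℂ[X]) :
    ∃ b ∈ Icc (-1 : ℝ) 1, ‖P.eval (b : ℂ)‖ = intervalNorm P := by
  have hne : (Icc (-1 : ℝ) 1).Nonempty := nonempty_Icc.mpr (by norm_num)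
  obtain ⟨b, hb, hmax⟩ := isCompact_Icc.exists_isMaxOn hne
    (continuous_norm_eval_ofReal P).continuousOn
  have := hne.to_subtype
  exact ⟨b, hb, le_antisymm (norm_eval_le_intervalNorm P hb) (ciSup_le fun x ↦ hmax x.2)⟩

theorem norm_eval_sub_le_intervalNorm_derivative (P : ℂ[X]) {x y : ℝ} (hx : x ∈ Icc (-1 : ℝ) 1)
    (hy : y ∈ Icc (-1 : ℝ) 1) :
    ‖P.eval (x : ℂ) - P.eval (y : ℂ)‖ ≤ intervalNorm (derivative P) * |x - y| :=
  (convex_Icc (-1 : ℝ) 1).norm_image_sub_le_of_norm_hasDerivWithin_le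
    (f := fun t : ℝ ↦ P.eval (t : ℂ))
    (fun t _ ↦ (P.hasDerivAt (t : ℂ)).comp_ofReal.hasDerivWithinAt)
    (fun _ ht ↦ norm_eval_le_intervalNorm (derivative P) ht) hy hx

theorem intervalNorm_le_two_mul_derivative {P : ℂ[X]} {a : ℝ} (ha : a ∈ Icc (-1 : ℝ) 1)
    (haz : P.eval (a : ℂ) = 0) : intervalNorm P ≤ 2 * intervalNorm (derivative P) := by
  obtain ⟨b, hb, hmax⟩ := exists_norm_eval_eq_intervalNorm P
  have hdist : |b - a| ≤ 2 := by
    rw [abs_le]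
    constructor <;> linarith [ha.1, ha.2, hb.1, hb.2]
  calc intervalNorm P = ‖P.eval (b : ℂ) - P.eval (a : ℂ)‖ := by rw [haz, sub_zero, hmax]
    _ ≤ intervalNorm (derivative P) * |b - a| := norm_eval_sub_le_intervalNorm_derivative P hb ha
    _ ≤ intervalNorm (derivative P) * 2 := by gcongr; exact intervalNorm_nonneg _
    _ = 2 * intervalNorm (derivative P) := mul_comm _ _

theorem exists_closedBall_subset_Icc_inter_closedBall {u v b r : ℝ} (hb : b ∈ Icc u v)
    (hr0 : 0 ≤ r) (hr : 2 * r ≤ v - u) :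
    ∃ c, closedBall c r ⊆ Icc u v ∩ closedBall b (2 * r) := by
  obtain ⟨hub, hbv⟩ := hb
  simp only [Real.closedBall_eq_Icc, Icc_inter_Icc]
  refine ⟨max (u + r) (min b (v - r)), Icc_subset_Icc (max_le ?_ ?_) (le_min ?_ ?_)⟩ <;> grind

theorem exists_closedBall_half_intervalNorm_le_norm_eval (P : ℂ[X]) {r : ℝ} (hr0 : 0 ≤ r)
    (hr1 : r ≤ 1) (hr : 4 * intervalNorm (derivative P) * r ≤ intervalNorm P) :
    ∃ c : ℝ, closedBall c r ⊆ Icc (-1) 1 ∧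
      ∀ x ∈ closedBall c r, intervalNorm P / 2 ≤ ‖P.eval (x : ℂ)‖ := by
  obtain ⟨b, hb, hmax⟩ := exists_norm_eval_eq_intervalNorm P
  obtain ⟨c, hc⟩ := exists_closedBall_subset_Icc_inter_closedBall hb hr0 (by linarith)
  refine ⟨c, fun x hx ↦ (hc hx).1, fun x hx ↦ ?_⟩
  obtain ⟨hxI, hxb⟩ := hc hx
  have hdrop : ‖P.eval (b : ℂ)‖ - ‖P.eval (x : ℂ)‖ ≤ intervalNorm P / 2 :=
    calc ‖P.eval (b : ℂ)‖ - ‖P.eval (x : ℂ)‖ ≤ ‖P.eval (b : ℂ) - P.eval (x : ℂ)‖ :=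
          norm_sub_norm_le _ _
      _ ≤ intervalNorm (derivative P) * |b - x| := norm_eval_sub_le_intervalNorm_derivative P hb hxI
      _ ≤ intervalNorm (derivative P) * (2 * r) := by
        gcongr
        · exact intervalNorm_nonneg _
        · rwa [← Real.dist_eq, dist_comm]
      _ ≤ intervalNorm P / 2 := by linarith
  linarith

theorem sq_mul_countP_roots_le_of_mul_intervalNorm_le {P : ℂ[X]} {r : ℝ} (hr0 : 0 < r)
    (hr1 : r ≤ 1) (hP : 0 < intervalNorm P)
    (hr : 4 * intervalNorm (derivative P) * r ≤ intervalNorm P) :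
    (r / 5) ^ 2 * P.roots.countP (fun z ↦ ‖z‖ ≤ 1 ∧ 0 ≤ z.im) ≤
      3 * P.roots.countP (fun z ↦ ¬ (‖z‖ ≤ 1 ∧ 0 ≤ z.im)) + 3 / 2 := by
  set S := intervalNorm P
  set M := intervalNorm (derivative P)
  obtain ⟨c, hcI, hhalf⟩ := exists_closedBall_half_intervalNorm_le_norm_eval P hr0.le hr1 hr
  have hM : 0 ≤ M := intervalNorm_nonneg _
  have hc : |c| ≤ 1 := abs_le.mpr (hcI (mem_closedBall_self hr0.le))
  have hne : ∀ x ∈ closedBall c r, P.eval (x : ℂ) ≠ 0 := fun x hx ↦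
    norm_pos_iff.mp (by linarith [hhalf x hx])
  have hlog : ∀ x ∈ closedBall c r,
      ‖(derivative P).eval (x : ℂ)‖ ≤ 2 * M / S * ‖P.eval (x : ℂ)‖ := fun x hx ↦
    calc ‖(derivative P).eval (x : ℂ)‖ ≤ M := norm_eval_le_intervalNorm _ (hcI hx)
      _ = 2 * M / S * (S / 2) := by field_simp
      _ ≤ 2 * M / S * ‖P.eval (x : ℂ)‖ := by gcongr; exact hhalf x hx
  have hdisc (z : ℂ) (hz : ‖z‖ ≤ 1 ∧ 0 ≤ z.im) : 0 ≤ z.im ∧ ‖z - c‖ ≤ 2 := by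
    refine ⟨hz.2, (norm_sub_le _ _).trans ?_⟩
    rw [Complex.norm_real, Real.norm_eq_abs]
    linarith [hz.1]
  have hrL : r * (2 * M / S) ≤ 1 / 2 := by
    rw [← mul_div_assoc, div_le_iff₀ hP]
    linarith
  calc (r / 5) ^ 2 * (P.roots.countP fun z ↦ ‖z‖ ≤ 1 ∧ 0 ≤ z.im : ℝ)
    _ ≤ (r / (2 * 2 + r)) ^ 2 * (P.roots.countP fun z ↦ ‖z‖ ≤ 1 ∧ 0 ≤ z.im) := by
      gcongr
      linarith
    _ ≤ 3 * (P.roots.countP fun z ↦ ¬ (‖z‖ ≤ 1 ∧ 0 ≤ z.im)) + 3 * (r * (2 * M / S)) :=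
      sq_mul_countP_roots_le hr0 hdisc hne hlog
    _ ≤ _ := by linarith

theorem sq_intervalNorm_mul_countP_roots_le {P : ℂ[X]}
    (hP : intervalNorm P ≤ 4 * intervalNorm (derivative P)) :
    intervalNorm P ^ 2 * P.roots.countP (fun z ↦ ‖z‖ ≤ 1 ∧ 0 ≤ z.im) ≤
      600 * (2 * P.roots.countP (fun z ↦ ¬ (‖z‖ ≤ 1 ∧ 0 ≤ z.im)) + 1) *
        intervalNorm (derivative P) ^ 2 := by
  rcases (intervalNorm_nonneg P).eq_or_lt with hS0 | hS
  · rw [← hS0, zero_pow two_ne_zero, zero_mul]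
    positivity
  set S := intervalNorm P
  set M := intervalNorm (derivative P)
  have hM : 0 < M := by linarith
  have hr1 : S / (4 * M) ≤ 1 := (div_le_one (by positivity)).mpr hP
  have hMr : 4 * M * (S / (4 * M)) = S := mul_div_cancel₀ S (by positivity)
  have hcount := sq_mul_countP_roots_le_of_mul_intervalNorm_le (by positivity) hr1 hS hMr.le
  set m := P.roots.countP fun z ↦ ‖z‖ ≤ 1 ∧ 0 ≤ z.im
  set m' := P.roots.countP fun z ↦ ¬ (‖z‖ ≤ 1 ∧ 0 ≤ z.im)
  calc S ^ 2 * m = 400 * M ^ 2 * ((S / (4 * M) / 5) ^ 2 * m) := by field_simp; ring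
    _ ≤ 400 * M ^ 2 * (3 * m' + 3 / 2) := by gcongr
    _ = 600 * (2 * m' + 1) * M ^ 2 := by ring

theorem sqrt_div_mul_le_of_mul_sq_le {x y S T : ℝ} (hy : 0 < y) (hT : 0 ≤ T)
    (h : x * S ^ 2 ≤ y * T ^ 2) : √(x / y) * S ≤ T :=
  calc √(x / y) * S ≤ √(x / y) * |S| := by gcongr; exact le_abs_self S
    _ = √(x / y * S ^ 2) := by rw [Real.sqrt_mul' _ (sq_nonneg S), Real.sqrt_sq_eq_abs]
    _ ≤ T := by
      rw [Real.sqrt_le_left hT, div_mul_eq_mul_div, div_le_iff₀' hy]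
      exact h

theorem lower_bound_corollary (n k : ℕ) (hk : 1 ≤ k) (hkn : k ≤ n)
    (P : Polynomial ℂ) (hdeg : P.natDegree ≤ n)
    (hroots : n - k ≤ P.roots.countP (fun z => ‖z‖ ≤ 1 ∧ 0 ≤ z.im))
    (a : ℝ) (ha : a ∈ Icc (-1:ℝ) 1) (haz : P.eval (a : ℂ) = 0) :
    max (1/2 : ℝ) ((1/808) * Real.sqrt (((n : ℝ) - (k : ℝ)) / (k : ℝ))) *
        (⨆ x : Icc (-1:ℝ) 1, ‖P.eval ((x : ℝ) : ℂ)‖) ≤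
      ⨆ x : Icc (-1:ℝ) 1, ‖(Polynomial.derivative P).eval ((x : ℝ) : ℂ)‖ := by
  change _ * intervalNorm P ≤ intervalNorm (derivative P)
  have hhalf := intervalNorm_le_two_mul_derivative ha haz
  rw [max_mul_of_nonneg _ _ (intervalNorm_nonneg P), max_le_iff]
  refine ⟨by linarith, ?_⟩
  set m := P.roots.countP fun z ↦ ‖z‖ ≤ 1 ∧ 0 ≤ z.im
  set m' := P.roots.countP fun z ↦ ¬ (‖z‖ ≤ 1 ∧ 0 ≤ z.im)
  set S := intervalNorm P
  set M := intervalNorm (derivative P)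
  have hM : 0 ≤ M := intervalNorm_nonneg _
  have hS4 : S ≤ 4 * M := by linarith
  have hcard : m + m' ≤ n :=
    (Multiset.card_eq_countP_add_countP _ _).symm.trans_le (P.card_roots'.trans hdeg)
  have hm : (n : ℝ) - k ≤ m := sub_le_iff_le_add.mpr (mod_cast by omega)
  have hm' : 2 * (m' : ℝ) + 1 ≤ 3 * k := mod_cast (by omega)
  have hsq : ((n : ℝ) - k) * S ^ 2 ≤ k * (808 * M) ^ 2 :=
    calc ((n : ℝ) - k) * S ^ 2 ≤ S ^ 2 * m := by rw [mul_comm]; gcongr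
      _ ≤ 600 * (2 * m' + 1) * M ^ 2 := sq_intervalNorm_mul_countP_roots_le hS4
      _ ≤ 600 * (3 * k) * M ^ 2 := by gcongr
      _ ≤ k * (808 * M) ^ 2 := by nlinarith [show 0 ≤ (k : ℝ) * M ^ 2 by positivity]
  linarith [sqrt_div_mul_le_of_mul_sq_le (by positivity) (by positivity) hsq]
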